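/- Let N, k, n be natural numbers with k ≤ n and k ≤ N − n, and let S_k ⊆ {0,1}^N be the set of binary strings of length N with Hamming weight exactly k. Then the Schmidt rank of S_k across the cut n is exactly k + 1: rank(Ψ_n(S_k)) = k + 1. -/

import Mathlib

/-!
The weight of a concatenation `u·v` is the sum of the weights of `u` and `v`, so the `(u, v)` entry
of the amplitude matrix is `1` exactly when the weight of `u` equals `k` minus the weight of `v`.
A matrix with entries `[f u = g v]` is, up to repeated rows and columns and to zero rows and
columns, an identity matrix indexed by the common values of `f` and `g`; its rank is the number of
these values. Here they are the weights `j` with `0 ≤ j ≤ n` and `0 ≤ k - j ≤ N - n`.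
-/

open Classical

/-- The reshaped amplitude matrix of a set `S` of binary strings of length `N`
across the cut `n`. -/
noncomputable def Psi (N n : ℕ) (hn : n ≤ N) (S : Set (Fin N → Fin 2)) :
    Matrix (Fin n → Fin 2) (Fin (N - n) → Fin 2) ℂ :=
  Matrix.of fun u v =>
    if (Fin.append u v ∘ Fin.cast (by omega : N = n + (N - n))) ∈ S then (1 : ℂ) else 0

/-- The set of binary strings of length `N` with Hamming weight exactly `k`. -/
def hammingSet (N k : ℕ) : Set (Fin N → Fin 2) :=
  {x | (Finset.univ.filter fun i => x i = 1).card = k}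

/-- The matrix of Iverson brackets `[f u = g v]` for labellings `f` of the rows and `g` of the
columns. The amplitude matrix of `hammingSet N k` has this form, with labels read off from the
weights. -/
def coincidenceMatrix (R : Type*) {m n α : Type*} [Zero R] [One R] [DecidableEq α]
    (f : m → α) (g : n → α) : Matrix m n R :=
  Matrix.of fun u v => if f u = g v then 1 else 0

namespace coincidenceMatrix

variable {R l m n α : Type*} [DecidableEq α]

lemma submatrix {l' m' : Type*} [Zero R] [One R] (f : l → α) (g : m → α) (r : l' → l)
    (c : m' → m) :
    (coincidenceMatrix R f g).submatrix r c = coincidenceMatrix R (f ∘ r) (g ∘ c) :=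
  rfl

lemma self_eq_one_of_injective [Zero R] [One R] [DecidableEq l] {f : l → α} (hf : f.Injective) :
    coincidenceMatrix R f f = 1 := by
  ext u v
  simp only [coincidenceMatrix, Matrix.of_apply, Matrix.one_apply, hf.eq_iff]

lemma mul_eq_of_injective [NonAssocSemiring R] [Fintype m] (f : l → α) {h : m → α} (g : n → α)
    (h_inj : h.Injective) (h_range : Set.range f ∩ Set.range g ⊆ Set.range h) :
    coincidenceMatrix R f h * coincidenceMatrix R h g = coincidenceMatrix R f g := by
  ext u v
  simp only [coincidenceMatrix, Matrix.mul_apply, Matrix.of_apply, ite_mul, one_mul, zero_mul]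
  by_cases hu : f u ∈ Set.range h
  · obtain ⟨s, hs⟩ := hu
    rw [Fintype.sum_eq_single s fun t hts => if_neg fun ht => hts (h_inj (ht.symm.trans hs.symm)),
      if_pos hs.symm, hs]
  · have hne (s : m) : f u ≠ h s := fun hs => hu ⟨s, hs.symm⟩
    have huv : f u ≠ g v := fun huv => hu (h_range ⟨⟨u, rfl⟩, v, huv.symm⟩)
    simp only [hne, huv, if_false, Finset.sum_const_zero]

theorem rank_eq_ncard [CommSemiring R] [StrongRankCondition R] [Fintype n]
    (f : m → α) (g : n → α) :
    (coincidenceMatrix R f g).rank = (Set.range f ∩ Set.range g).ncard := by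
  set S := Set.range f ∩ Set.range g
  have : Fintype S := ((Set.finite_range g).inter_of_right _).fintype
  have factorization : coincidenceMatrix R f ((↑) : S → α) * coincidenceMatrix R (↑) g =
      coincidenceMatrix R f g :=
    mul_eq_of_injective f g Subtype.val_injective (by rw [Subtype.range_coe])
  choose row h_row using fun s : S => s.2.1
  choose col h_col using fun s : S => s.2.2
  have submatrix_eq_one : (coincidenceMatrix R f g).submatrix row col = 1 := by
    rw [submatrix, show f ∘ row = (↑) from funext h_row, show g ∘ col = (↑) from funext h_col,
      self_eq_one_of_injective Subtype.val_injective]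
  rw [← Nat.card_coe_set_eq, Nat.card_eq_fintype_card]
  apply le_antisymm
  · rw [← factorization]
    exact (Matrix.rank_mul_le_left _ _).trans (Matrix.rank_le_card_width _)
  · rw [← Matrix.rank_one (R := R) (n := S), ← submatrix_eq_one]
    exact Matrix.rank_submatrix_le _ row col

end coincidenceMatrix

section HammingNorm

variable {ι κ α : Type*} [Fintype ι] [Fintype κ] [Zero α] [DecidableEq α]

lemma hammingNorm_comp_equiv (e : ι ≃ κ) (x : κ → α) : hammingNorm (x ∘ e) = hammingNorm x := by
  simp only [hammingNorm, Finset.card_filter, Function.comp_apply]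
  exact e.sum_comp fun i => if x i ≠ 0 then 1 else 0

lemma hammingNorm_append {m n : ℕ} (u : Fin m → α) (v : Fin n → α) :
    hammingNorm (Fin.append u v) = hammingNorm u + hammingNorm v := by
  simp only [hammingNorm, Finset.card_filter, Fin.sum_univ_add, Fin.append_left, Fin.append_right]

lemma range_hammingNorm [Nontrivial α] :
    Set.range (hammingNorm : (ι → α) → ℕ) = Set.Iic (Fintype.card ι) := by
  refine Set.Subset.antisymm (Set.range_subset_iff.2 fun _ => hammingNorm_le_card_fintype) ?_
  intro j hj
  obtain ⟨s, -, hs⟩ := Finset.exists_subset_card_eq (s := (Finset.univ : Finset ι)) hj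
  obtain ⟨a, ha⟩ := exists_ne (0 : α)
  refine ⟨fun i => if i ∈ s then a else 0, ?_⟩
  simpa [hammingNorm, ha] using hs

lemma range_hammingNorm_inter_range_sub [Nontrivial α] (k : ℕ) :
    (Set.range fun u : ι → α => (hammingNorm u : ℤ)) ∩
        (Set.range fun v : κ → α => (k : ℤ) - hammingNorm v) =
      (↑) '' Set.Icc (k - Fintype.card κ) (min k (Fintype.card ι)) := by
  calc
    _ = (Nat.cast '' Set.Iic (Fintype.card ι)) ∩
          ((fun j : ℕ => (k : ℤ) - j) '' Set.Iic (Fintype.card κ)) := by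
      simp only [← range_hammingNorm (α := α), ← Set.range_comp, Function.comp_def]
    _ = _ := by
      ext z
      simp only [Set.mem_inter_iff, Set.mem_image, Set.mem_Iic, Set.mem_Icc]
      constructor
      · rintro ⟨⟨i, hi, rfl⟩, j, hj, hij⟩
        exact ⟨i, by omega, rfl⟩
      · rintro ⟨i, hi, rfl⟩
        exact ⟨⟨i, by omega, rfl⟩, k - i, by omega, by omega⟩

end HammingNorm

lemma mem_hammingSet_iff {N k : ℕ} {x : Fin N → Fin 2} :
    x ∈ hammingSet N k ↔ hammingNorm x = k := by
  have eq_one_iff_ne_zero (a : Fin 2) : a = 1 ↔ a ≠ 0 := by lia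
  simp only [hammingSet, hammingNorm, Set.mem_ofPred_eq, eq_one_iff_ne_zero]

-- The weights are compared in `ℤ`: truncated subtraction would match `u = 0` with every `v` of
-- weight greater than `k`.
lemma Psi_hammingSet (N k n : ℕ) (hn : n ≤ N) :
    Psi N n hn (hammingSet N k) =
      coincidenceMatrix ℂ (fun u => (hammingNorm u : ℤ)) (fun v => (k : ℤ) - hammingNorm v) := by
  ext u v
  have hammingNorm_concat :
      hammingNorm (Fin.append u v ∘ Fin.cast (by omega : N = n + (N - n))) =
        hammingNorm u + hammingNorm v :=
    (hammingNorm_comp_equiv (finCongr (by omega)) _).trans (hammingNorm_append u v)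
  have weights_iff : hammingNorm u + hammingNorm v = k ↔
      (hammingNorm u : ℤ) = k - hammingNorm v := by omega
  simp only [Psi, coincidenceMatrix, Matrix.of_apply, mem_hammingSet_iff, hammingNorm_concat,
    weights_iff]

theorem rank_Psi_hammingSet_eq_general (N k n : ℕ) (hn : n ≤ N) :
    (Psi N n hn (hammingSet N k)).rank = (Finset.Icc (k - (N - n)) (min k n)).card := by
  rw [Psi_hammingSet, coincidenceMatrix.rank_eq_ncard, range_hammingNorm_inter_range_sub,
    Fintype.card_fin, Fintype.card_fin,
    Set.ncard_image_of_injective _ Nat.cast_injective, ← Finset.coe_Icc, Set.ncard_coe_finset]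

/-- For `k ≤ n` and `k ≤ N - n`, the Schmidt rank of the Dicke-`k` state across the cut `n`
is exactly `k + 1`. -/
theorem rank_Psi_hammingSet_eq (N k n : ℕ) (hn : n ≤ N) (hkn : k ≤ n) (hkm : k ≤ N - n) :
    (Psi N n hn (hammingSet N k)).rank = k + 1 := by
  rw [rank_Psi_hammingSet_eq_general, Nat.card_Icc]
  omega
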